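/- arXiv:1208.5278 — 2 statements merged into one kernel-verified Lean document; each statement's English description precedes it below -/
import Mathlib

section
/- Every 2-cocycle on the q-deformed W(2,2) algebra is cohomologous to a linear combination of β and γ: if ψ: W_q × W_q → ℂ is bilinear, skew-symmetric, and satisfies ψ(α(x),[y,z]_q) + ψ(α(y),[z,x]_q) + ψ(α(z),[x,y]_q) = 0 for all x,y,z ∈ W_q, then there exist λ, μ ∈ ℂ and a linear map f: W_q → ℂ such that ψ(x,y) = λ·β(x,y) + μ·γ(x,y) + f([x,y]_q) for all x,y ∈ W_q. -/
noncomputable section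

/-- The underlying space of the q-deformed W(2,2) algebra: formal ℂ-linear
combinations of the basis `{L_n, M_n : n ∈ ℤ}`. -/
abbrev Wq : Type := (ℤ →₀ ℂ) × (ℤ →₀ ℂ)

/-- The basis vector `L_n`. -/
def Lb (n : ℤ) : Wq := (Finsupp.single n 1, 0)

/-- The basis vector `M_n`. -/
def Mb (n : ℤ) : Wq := (0, Finsupp.single n 1)

/-- The q-number `[n]_q = (q^n - q^(-n))/(q - q⁻¹)`. -/
def qnum (q : ℂ) (n : ℤ) : ℂ := (q ^ n - q ^ (-n)) / (q - q⁻¹)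

/-- `⟨n⟩_q = q^n + q^(-n)`. -/
def qang (q : ℂ) (n : ℤ) : ℂ := q ^ n + q ^ (-n)

/-- The value `[m−1]_q[m]_q[m+1]_q / ([2]_q[3]_q⟨m⟩_q)` appearing in the
2-cocycles `β` and `γ`. -/
def cocyc (q : ℂ) (m : ℤ) : ℂ :=
  qnum q (m - 1) * qnum q m * qnum q (m + 1) / (qnum q 2 * qnum q 3 * qang q m)

/-!
On the basis, the cocycle identity on a triple `(L, L, L)` or `(L, L, M)` becomes the same
functional equation for `b m n = ψ (L_m, L_n)` or `b m n = ψ (L_m, M_n)`. Putting `x = 0` in it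
shows that off the antidiagonal `m + n = 0` the array `b` is a coboundary; the coboundary can be
chosen so that the difference also vanishes at `(1, -1)`. What remains is `D x = ⟨x⟩ b x (-x)`,
which is odd and satisfies `D x [x + 2] = D (x + 1) [x - 1]`, so it is a multiple of
`[x - 1] [x] [x + 1]`. On `(L, M, M)` only two terms of the identity survive, and they force
`ψ (M_m, M_n)` to vanish.
-/

open Function

section QNumbers

variable {q : ℂ}

lemma zpow_injective_of_forall_zpow_ne_one (hq0 : q ≠ 0) (hq1 : ∀ k : ℤ, 1 ≤ k → q ^ k ≠ 1) :
    Injective fun n : ℤ ↦ q ^ n := by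
  refine Injective.of_lt_imp_ne fun m n hmn h ↦ hq1 (n - m) (by lia) ?_
  rw [zpow_sub₀ hq0, ← h, div_self (zpow_ne_zero m hq0)]

lemma ne_zero_of_zpow_injective (hq : Injective fun n : ℤ ↦ q ^ n) : q ≠ 0 := by
  rintro rfl
  exact absurd (@hq 1 2 (by simp)) (by decide)

lemma qnum_neg (n : ℤ) : qnum q (-n) = -qnum q n := by
  rw [qnum, qnum, neg_neg, ← neg_div, neg_sub]

lemma qnum_zero : qnum q 0 = 0 := by simp [qnum]

lemma qang_neg (n : ℤ) : qang q (-n) = qang q n := by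
  rw [qang, qang, neg_neg, add_comm]

lemma qang_zero : qang q 0 = 2 := by norm_num [qang]

lemma sub_inv_ne_zero_of_zpow_injective (hq : Injective fun n : ℤ ↦ q ^ n) : q - q⁻¹ ≠ 0 := by
  intro h
  exact absurd (@hq 1 (-1) (by simpa [sub_eq_zero] using h)) (by decide)

lemma qnum_one (hq : Injective fun n : ℤ ↦ q ^ n) : qnum q 1 = 1 := by
  rw [qnum, zpow_neg, zpow_one, div_self (sub_inv_ne_zero_of_zpow_injective hq)]

lemma qnum_ne_zero (hq : Injective fun n : ℤ ↦ q ^ n) {n : ℤ} (hn : n ≠ 0) : qnum q n ≠ 0 := by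
  refine div_ne_zero (fun h ↦ hn ?_) (sub_inv_ne_zero_of_zpow_injective hq)
  have : n = -n := hq (sub_eq_zero.mp h)
  lia

lemma qang_ne_zero (hq : Injective fun n : ℤ ↦ q ^ n) (n : ℤ) : qang q n ≠ 0 := by
  intro h
  have hq0 := ne_zero_of_zpow_injective hq
  have sq_eq : q ^ (2 * n) = q ^ (-(2 * n)) := by
    rw [two_mul, neg_add, zpow_add₀ hq0, zpow_add₀ hq0, eq_neg_of_add_eq_zero_left h, neg_mul_neg]
  have : 2 * n = -(2 * n) := hq sq_eq
  obtain rfl : n = 0 := by lia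
  exact two_ne_zero (qang_zero.symm.trans h)

lemma qang_mul_qnum_add_qang_mul_qnum (hq0 : q ≠ 0) (m n : ℤ) :
    qang q m * qnum q n + qang q n * qnum q m = 2 * qnum q (m + n) := by
  simp only [qang, qnum, neg_add, zpow_add₀ hq0]
  ring

lemma qang_mul_qnum_mul_qnum_add (hq0 : q ≠ 0) (x y z : ℤ) :
    qang q x * qnum q (z - y) * qnum q (y + z - x) +
        qang q y * qnum q (x - z) * qnum q (x + z - y) =
      qang q z * qnum q (y - x) * qnum q (z - (x + y)) := by
  have hx := zpow_ne_zero x hq0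
  have hy := zpow_ne_zero y hq0
  have hz := zpow_ne_zero z hq0
  simp only [qang, qnum, sub_eq_add_neg, neg_add, neg_neg, zpow_add₀ hq0, zpow_neg]
  generalize q + -q⁻¹ = d
  field_simp
  ring

lemma qnum_mul_eq_of_odd_of_recurrence (hq : Injective fun n : ℤ ↦ q ^ n) {D : ℤ → ℂ}
    (hodd : D.Odd) (hrec : ∀ x, D x * qnum q (x + 2) = D (x + 1) * qnum q (x - 1)) (x : ℤ) :
    qnum q 2 * qnum q 3 * D x = D 2 * (qnum q (x - 1) * qnum q x * qnum q (x + 1)) := by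
  have D_zero : D 0 = 0 := hodd.map_zero
  have D_one : D 1 = 0 := by
    simpa [qnum_zero, qnum_ne_zero hq (show (3 : ℤ) ≠ 0 by decide)] using hrec 1
  wlog hx : 0 ≤ x generalizing x
  · have h := this (-x) (by lia)
    rw [hodd, show -x - 1 = -(x + 1) by ring, show -x + 1 = -(x - 1) by ring, qnum_neg, qnum_neg,
      qnum_neg] at h
    linear_combination -h
  obtain rfl | rfl | hx : x = 0 ∨ x = 1 ∨ 2 ≤ x := by lia
  · simp [D_zero, qnum_zero]
  · simp [D_one, qnum_zero]
  induction x, hx using Int.leInduction with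
  | base => norm_num [qnum_one hq, mul_comm]
  | succ n hn ih =>
    apply mul_right_cancel₀ (qnum_ne_zero hq (show n - 1 ≠ 0 by lia))
    rw [add_sub_cancel_right, show n + 1 + 1 = n + 2 by ring]
    linear_combination -(qnum q 2 * qnum q 3) * hrec n + qnum q (n + 2) * ih (by lia)

end QNumbers

/-- The cocycle identity on a triple `(L_x, L_y, M_z)`, in terms of the array
`b m n = ψ (L_m, M_n)`; the term `ψ (M_z, L_{x+y})` is moved to the right by skew-symmetry.
With `b m n = ψ (L_m, L_n)` it is also the cocycle identity on `(L_x, L_y, L_z)`. -/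
def IsArrayCocycle (q : ℂ) (b : ℤ → ℤ → ℂ) : Prop :=
  ∀ x y z : ℤ, qang q x * qnum q (z - y) * b x (y + z) + qang q y * qnum q (x - z) * b y (x + z) =
    qang q z * qnum q (y - x) * b (x + y) z

/-- The array of the coboundary `(u, v) ↦ f [u, v]_q`, where `g n` is the value of `f` at the `n`-th
basis vector. -/
def arrayCoboundary (q : ℂ) (g : ℤ → ℂ) (m n : ℤ) : ℂ := qnum q (n - m) * g (m + n)

lemma isArrayCocycle_arrayCoboundary {q : ℂ} (hq0 : q ≠ 0) (g : ℤ → ℂ) :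
    IsArrayCocycle q (arrayCoboundary q g) := by
  intro x y z
  simp only [arrayCoboundary, ← add_assoc, add_comm y x]
  linear_combination g (x + y + z) * qang_mul_qnum_mul_qnum_add hq0 x y z

namespace IsArrayCocycle

variable {q : ℂ} {b c : ℤ → ℤ → ℂ}

lemma sub (hb : IsArrayCocycle q b) (hc : IsArrayCocycle q c) : IsArrayCocycle q (b - c) := by
  intro x y z
  simp only [Pi.sub_apply]
  linear_combination hb x y z - hc x y z

lemma qnum_add_mul (hb : IsArrayCocycle q b) (hq0 : q ≠ 0) (m n : ℤ) :
    qnum q (m + n) * b m n = qnum q (n - m) * b 0 (m + n) := by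
  have h := hb 0 m n
  rw [qang_zero, zero_sub, sub_zero, zero_add, zero_add, qnum_neg] at h
  linear_combination (-b m n / 2) * qang_mul_qnum_add_qang_mul_qnum hq0 m n - h / 2

lemma zero_zero (hb : IsArrayCocycle q b) (hq : Injective fun n : ℤ ↦ q ^ n) : b 0 0 = 0 := by
  simpa [qnum_zero, qnum_ne_zero hq (show (2 : ℤ) ≠ 0 by decide)] using
    hb.qnum_add_mul (ne_zero_of_zpow_injective hq) (-1) 1

lemma odd_antidiagonal (hb : IsArrayCocycle q b) (hq : Injective fun n : ℤ ↦ q ^ n) :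
    Function.Odd fun x ↦ b x (-x) := by
  intro x
  rcases eq_or_ne x 0 with rfl | hx
  · simp [hb.zero_zero hq]
  have h := hb x (-x) 0
  rw [add_neg_cancel, hb.zero_zero hq, add_zero, add_zero, zero_sub, sub_zero, neg_neg,
    qang_neg] at h
  apply mul_left_cancel₀ (mul_ne_zero (qang_ne_zero hq x) (qnum_ne_zero hq hx))
  simp only [neg_neg]
  linear_combination h

lemma antidiagonal_recurrence (hb : IsArrayCocycle q b) (hb1 : b 1 (-1) = 0) (x : ℤ) :
    qang q x * b x (-x) * qnum q (x + 2) =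
      qang q (x + 1) * b (x + 1) (-(x + 1)) * qnum q (x - 1) := by
  have h := hb x 1 (-(x + 1))
  rw [qang_neg, show -(x + 1) - 1 = -(x + 2) by ring, show 1 + -(x + 1) = -x by ring,
    show x + -(x + 1) = -1 by ring, show 1 - x = -(x - 1) by ring, hb1, qnum_neg, qnum_neg] at h
  linear_combination -h

lemma antidiagonal_eq_mul_cocyc (hb : IsArrayCocycle q b) (hq : Injective fun n : ℤ ↦ q ^ n)
    (hb1 : b 1 (-1) = 0) (x : ℤ) : b x (-x) = qang q 2 * b 2 (-2) * cocyc q x := by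
  have odd : Function.Odd fun x ↦ qang q x * b x (-x) := fun x ↦ by
    linear_combination qang q x * hb.odd_antidiagonal hq x + b (-x) (- -x) * qang_neg (q := q) x
  have closed_form := qnum_mul_eq_of_odd_of_recurrence hq odd (hb.antidiagonal_recurrence hb1) x
  have h2 := qnum_ne_zero hq (show (2 : ℤ) ≠ 0 by decide)
  have h3 := qnum_ne_zero hq (show (3 : ℤ) ≠ 0 by decide)
  have hx := qang_ne_zero hq x
  rw [cocyc]
  field_simp
  linear_combination closed_form

lemma exists_eq_arrayCoboundary (hb : IsArrayCocycle q b) (hq : Injective fun n : ℤ ↦ q ^ n) :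
    ∃ g : ℤ → ℂ, (∀ m n, m + n ≠ 0 → b m n = arrayCoboundary q g m n) ∧
      b 1 (-1) = arrayCoboundary q g 1 (-1) := by
  refine ⟨fun n ↦ if n = 0 then b 1 (-1) / qnum q (-1 - 1) else b 0 n / qnum q n, ?_, ?_⟩
  · intro m n hmn
    rw [arrayCoboundary, if_neg hmn, mul_div_assoc', eq_div_iff (qnum_ne_zero hq hmn), mul_comm]
    exact hb.qnum_add_mul (ne_zero_of_zpow_injective hq) m n
  · rw [arrayCoboundary, if_pos (add_neg_cancel 1),
      mul_div_cancel₀ _ (qnum_ne_zero hq (by decide))]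

theorem exists_eq_cocyc_add_arrayCoboundary (hb : IsArrayCocycle q b)
    (hq : Injective fun n : ℤ ↦ q ^ n) :
    ∃ (lam : ℂ) (g : ℤ → ℂ), ∀ m n : ℤ,
      b m n = lam * (if m = -n then cocyc q m else 0) + arrayCoboundary q g m n := by
  obtain ⟨g, hg, hg1⟩ := hb.exists_eq_arrayCoboundary hq
  have cocycle_sub : IsArrayCocycle q (b - arrayCoboundary q g) :=
    hb.sub (isArrayCocycle_arrayCoboundary (ne_zero_of_zpow_injective hq) g)
  refine ⟨qang q 2 * (b - arrayCoboundary q g) 2 (-2), g, fun m n ↦ ?_⟩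
  split_ifs with hmn
  · obtain rfl : n = -m := by lia
    rw [← cocycle_sub.antidiagonal_eq_mul_cocyc hq (sub_eq_zero.mpr hg1) m]
    exact (sub_add_cancel _ _).symm
  · rw [hg m n (by lia), mul_zero, zero_add]

end IsArrayCocycle

lemma eq_zero_of_skew_of_two_term_identity {q : ℂ} (hq : Injective fun n : ℤ ↦ q ^ n)
    {c : ℤ → ℤ → ℂ} (hskew : ∀ m n, c m n = -c n m)
    (hc : ∀ x y z : ℤ, qang q y * qnum q (x - z) * c y (x + z) =
      qang q z * qnum q (x - y) * c z (x + y)) (m n : ℤ) : c m n = 0 := by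
  by_cases hmn : m + n = 0
  · have hc0 : c 0 0 = 0 := self_eq_neg.mp (hskew 0 0)
    obtain rfl : n = -m := by lia
    rcases eq_or_ne m 0 with rfl | hm
    · simpa using hc0
    simpa [hc0, qang_ne_zero hq, qnum_ne_zero hq (neg_ne_zero.mpr hm)] using hc (-m) m 0
  · have h := hc 0 m n
    rw [zero_add, zero_add, zero_sub, zero_sub, qnum_neg, qnum_neg, hskew n m] at h
    have weighted_eq_zero : qnum q (m + n) * c m n = 0 := by
      linear_combination -h / 2 - c m n / 2 *
        qang_mul_qnum_add_qang_mul_qnum (ne_zero_of_zpow_injective hq) m n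
    exact (mul_eq_zero.mp weighted_eq_zero).resolve_left (qnum_ne_zero hq hmn)

section HomLieCocycle

variable {V : Type*} [AddCommGroup V] [Module ℂ V] {q : ℂ} {br : V →ₗ[ℂ] V →ₗ[ℂ] V}
  {α : V →ₗ[ℂ] V} {ψ : V →ₗ[ℂ] V →ₗ[ℂ] ℂ} {u v : ℤ → V}

lemma isArrayCocycle_of_cocycle
    (huu : ∀ n m : ℤ, br (u n) (u m) = qnum q (m - n) • u (m + n))
    (huv : ∀ n m : ℤ, br (u n) (v m) = qnum q (m - n) • v (m + n))
    (hvu : ∀ m n : ℤ, br (v m) (u n) = qnum q (n - m) • v (m + n))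
    (hαu : ∀ n : ℤ, α (u n) = qang q n • u n) (hαv : ∀ n : ℤ, α (v n) = qang q n • v n)
    (hskew : ∀ x y : V, ψ x y = -ψ y x)
    (hcocy : ∀ x y z : V, ψ (α x) (br y z) + ψ (α y) (br z x) + ψ (α z) (br x y) = 0) :
    IsArrayCocycle q fun m n ↦ ψ (u m) (v n) := by
  intro x y z
  have h := hcocy (u x) (u y) (v z)
  simp only [huu, huv, hvu, hαu, hαv, map_smul, LinearMap.smul_apply, smul_eq_mul] at h
  rw [hskew (v z), add_comm z y, add_comm z x, add_comm y x] at h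
  linear_combination h

lemma cocycle_eq_zero_of_abelian (hq : Injective fun n : ℤ ↦ q ^ n)
    (huv : ∀ n m : ℤ, br (u n) (v m) = qnum q (m - n) • v (m + n))
    (hvu : ∀ m n : ℤ, br (v m) (u n) = qnum q (n - m) • v (m + n))
    (hvv : ∀ n m : ℤ, br (v n) (v m) = 0) (hαv : ∀ n : ℤ, α (v n) = qang q n • v n)
    (hskew : ∀ x y : V, ψ x y = -ψ y x)
    (hcocy : ∀ x y z : V, ψ (α x) (br y z) + ψ (α y) (br z x) + ψ (α z) (br x y) = 0)
    (m n : ℤ) : ψ (v m) (v n) = 0 := by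
  refine eq_zero_of_skew_of_two_term_identity hq (c := fun m n ↦ ψ (v m) (v n))
    (fun m n ↦ hskew (v m) (v n)) (fun x y z ↦ ?_) m n
  have h := hcocy (u x) (v y) (v z)
  simp only [hvv, huv, hvu, hαv, map_smul, LinearMap.smul_apply, smul_eq_mul, map_zero] at h
  rw [add_comm z x, add_comm y x, ← neg_sub x y, qnum_neg] at h
  linear_combination h

end HomLieCocycle

namespace Wq

variable {N : Type*} [AddCommMonoid N] [Module ℂ N]

lemma hom_ext {f g : Wq →ₗ[ℂ] N} (hL : ∀ n, f (Lb n) = g (Lb n)) (hM : ∀ n, f (Mb n) = g (Mb n)) :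
    f = g :=
  LinearMap.prod_ext (Finsupp.lhom_ext' fun n ↦ LinearMap.ext_ring (hL n))
    (Finsupp.lhom_ext' fun n ↦ LinearMap.ext_ring (hM n))

lemma bilin_ext {φ χ : Wq →ₗ[ℂ] Wq →ₗ[ℂ] N}
    (hLL : ∀ m n, φ (Lb m) (Lb n) = χ (Lb m) (Lb n))
    (hLM : ∀ m n, φ (Lb m) (Mb n) = χ (Lb m) (Mb n))
    (hML : ∀ m n, φ (Mb m) (Lb n) = χ (Mb m) (Lb n))
    (hMM : ∀ m n, φ (Mb m) (Mb n) = χ (Mb m) (Mb n)) : φ = χ :=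
  hom_ext (fun m ↦ hom_ext (hLL m) (hLM m)) fun m ↦ hom_ext (hML m) (hMM m)

/-- The linear map out of `Wq` with prescribed values `g n` at `L_n` and `h n` at `M_n`. -/
def lift (g h : ℤ → N) : Wq →ₗ[ℂ] N :=
  (Finsupp.linearCombination ℂ g).coprod (Finsupp.linearCombination ℂ h)

@[simp]
lemma lift_Lb (g h : ℤ → N) (n : ℤ) : lift g h (Lb n) = g n := by simp [lift, Lb]

@[simp]
lemma lift_Mb (g h : ℤ → N) (n : ℤ) : lift g h (Mb n) = h n := by simp [lift, Mb]

end Wq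

/-- Every 2-cocycle on the q-deformed W(2,2) algebra is cohomologous to a
linear combination of `β` and `γ`. -/
theorem cocycle_eq_combination_up_to_coboundary (q : ℂ) (hq0 : q ≠ 0)
    (hq1 : ∀ k : ℤ, 1 ≤ k → q ^ k ≠ 1)
    (br : Wq →ₗ[ℂ] Wq →ₗ[ℂ] Wq) (α : Wq →ₗ[ℂ] Wq)
    (hLL : ∀ n m : ℤ, br (Lb n) (Lb m) = qnum q (m - n) • Lb (m + n))
    (hLM : ∀ n m : ℤ, br (Lb n) (Mb m) = qnum q (m - n) • Mb (m + n))
    (hML : ∀ m n : ℤ, br (Mb m) (Lb n) = qnum q (n - m) • Mb (m + n))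
    (hMM : ∀ n m : ℤ, br (Mb n) (Mb m) = 0)
    (hαL : ∀ n : ℤ, α (Lb n) = qang q n • Lb n)
    (hαM : ∀ n : ℤ, α (Mb n) = qang q n • Mb n)
    (β γ : Wq →ₗ[ℂ] Wq →ₗ[ℂ] ℂ)
    (hβLL : ∀ m n : ℤ, β (Lb m) (Lb n) = if m = -n then cocyc q m else 0)
    (hβLM : ∀ m n : ℤ, β (Lb m) (Mb n) = 0)
    (hβML : ∀ m n : ℤ, β (Mb m) (Lb n) = 0)
    (hβMM : ∀ m n : ℤ, β (Mb m) (Mb n) = 0)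
    (hγLM : ∀ m n : ℤ, γ (Lb m) (Mb n) = if m = -n then cocyc q m else 0)
    (hγML : ∀ m n : ℤ, γ (Mb m) (Lb n) = if m = -n then -cocyc q n else 0)
    (hγLL : ∀ m n : ℤ, γ (Lb m) (Lb n) = 0)
    (hγMM : ∀ m n : ℤ, γ (Mb m) (Mb n) = 0)
    (ψ : Wq →ₗ[ℂ] Wq →ₗ[ℂ] ℂ)
    (hψskew : ∀ x y : Wq, ψ x y = - ψ y x)
    (hψcocy : ∀ x y z : Wq,
      ψ (α x) (br y z) + ψ (α y) (br z x) + ψ (α z) (br x y) = 0) :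
    ∃ (lam mu : ℂ) (f : Wq →ₗ[ℂ] ℂ),
      ∀ x y : Wq, ψ x y = lam * β x y + mu * γ x y + f (br x y) := by
  have hq := zpow_injective_of_forall_zpow_ne_one hq0 hq1
  obtain ⟨lam, fL, hfL⟩ := (isArrayCocycle_of_cocycle hLL hLL
    (fun m n ↦ add_comm n m ▸ hLL m n) hαL hαL hψskew hψcocy).exists_eq_cocyc_add_arrayCoboundary hq
  obtain ⟨mu, fM, hfM⟩ := (isArrayCocycle_of_cocycle hLL hLM hML hαL hαM hψskew
    hψcocy).exists_eq_cocyc_add_arrayCoboundary hq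
  have hψMM := cocycle_eq_zero_of_abelian hq hLM hML hMM hαM hψskew hψcocy
  have decomposition : ψ = lam • β + mu • γ + br.compr₂ (Wq.lift fL fM) := by
    refine Wq.bilin_ext (fun m n ↦ ?_) (fun m n ↦ ?_) (fun m n ↦ ?_) (fun m n ↦ ?_)
    · simp [hfL, hLL, hβLL, hγLL, arrayCoboundary, add_comm n m]
    · simp [hfM, hLM, hβLM, hγLM, arrayCoboundary, add_comm n m]
    · have hγskew : γ (Mb m) (Lb n) = -γ (Lb n) (Mb m) := by grind
      rw [hψskew, hfM, arrayCoboundary, ← neg_sub n m, qnum_neg, add_comm n m, ← hγLM]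
      simp [hML, hβML, hγskew, add_comm (_ * _)]
    · simp [hψMM, hMM, hβMM, hγMM]
  exact ⟨lam, mu, Wq.lift fL fM, LinearMap.congr_fun₂ decomposition⟩
end
end

section
/- Every derivation of the q-deformed W(2,2) algebra is the sum of a derivation of degree zero and an inner derivation: if D: W_q → W_q is linear with D ∘ α = α ∘ D and D([x,y]_q) = [D(x), y]_q + [x, D(y)]_q for all x, y ∈ W_q, then there exist a linear map D₀: W_q → W_q with D₀(W_qⁿ) ⊆ W_qⁿ for all n ∈ ℤ satisfying D₀([x,y]_q) = [D₀(x), y]_q + [x, D₀(y)]_q, and an element v ∈ W_q, such that D(x) = D₀(x) + [x, v]_q for all x ∈ W_q. -/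
noncomputable section

/-- The graded subspace `W_qⁿ = span_ℂ{L_n, M_n}`. -/
def Wgr (n : ℤ) : Submodule ℂ Wq := Submodule.span ℂ {Lb n, Mb n}

/-!
As `D` commutes with `α`, it preserves the eigenspaces of `α`. Since `q` is not a root of unity,
`⟨m⟩_q = ⟨n⟩_q` only for `m = ±n`, so `D` maps `W_qⁿ` into `W_qⁿ + W_q⁻ⁿ`. For `n ≠ 0` the space
`W_qⁿ` is spanned by the brackets `[x, y]` with `x ∈ W_q⁻ⁿ` and `y ∈ W_q²ⁿ`, and the component of
degree `-n` of `D [x, y] = [D x, y] + [x, D y]` involves only the component of degree `-3n` of `D x`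
and that of degree `0` of `D y`. Both vanish, so `D` itself has degree zero and the inner part can
be taken to be `0`.
-/

open DirectSum Module

section Graded

variable {ι κ R V W : Type*} [DecidableEq ι] [DecidableEq κ]

section Semiring

variable [Semiring R] [AddCommMonoid V] [Module R V] [AddCommMonoid W] [Module R W]
  (𝒜 : ι → Submodule R V) [Decomposition 𝒜]

theorem coe_decompose_map (ℬ : κ → Submodule R W) [Decomposition ℬ] {f : V →ₗ[R] W} {σ : ι → κ}
    (hσ : Function.Injective σ) (hf : ∀ i, 𝒜 i ≤ (ℬ (σ i)).comap f) (x : V) (i : ι) :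
    (decompose ℬ (f x) (σ i) : W) = f (decompose 𝒜 x i) := by
  induction x using Decomposition.inductionOn 𝒜 with
  | zero => simp
  | @homogeneous j x =>
    obtain rfl | hij := eq_or_ne j i
    · rw [decompose_of_mem_same ℬ (hf j x.2), decompose_of_mem_same 𝒜 x.2]
    · rw [decompose_of_mem_ne ℬ (hf j x.2) (hσ.ne hij), decompose_of_mem_ne 𝒜 x.2 hij, map_zero]
  | add x y hx hy => simp [hx, hy]

theorem mem_of_forall_ne_decompose_eq_zero {x : V} {i : ι}
    (h : ∀ j, j ≠ i → (decompose 𝒜 x j : V) = 0) : x ∈ 𝒜 i := by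
  classical
  rw [← sum_support_decompose 𝒜 x]
  refine sum_mem fun j _ => ?_
  obtain rfl | hj := eq_or_ne j i
  · exact (decompose 𝒜 x j).2
  · exact h j hj ▸ zero_mem _

end Semiring

variable [CommRing R] [AddCommGroup V] [Module R V] {𝒜 : ι → Submodule R V} [Decomposition 𝒜]

theorem decompose_eq_zero_of_commute [IsDomain R] [IsTorsionFree R V] {α D : End R V}
    {c : ι → R} (hα : ∀ i, 𝒜 i ≤ End.eigenspace α (c i)) (hD : Commute D α) {i j : ι}
    (hij : c i ≠ c j) {x : V} (hx : x ∈ 𝒜 i) : (decompose 𝒜 (D x) j : V) = 0 := by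
  have hα_apply {k : ι} {y : V} (hy : y ∈ 𝒜 k) : α y = c k • y :=
    End.mem_eigenspace_iff.mp (hα k hy)
  have hα_le (k : ι) : 𝒜 k ≤ (𝒜 k).comap α := fun y hy =>
    Submodule.mem_comap.mpr (hα_apply hy ▸ (𝒜 k).smul_mem _ hy)
  have hαD : α (D x) = c i • D x := by
    rw [← End.mul_apply, ← hD.eq, End.mul_apply, hα_apply hx, map_smul]
  have hsmul : c i • (decompose 𝒜 (D x) j : V) = c j • (decompose 𝒜 (D x) j : V) :=
    calc c i • (decompose 𝒜 (D x) j : V)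
      _ = decompose 𝒜 (α (D x)) j := by rw [hαD, decompose_smul]; rfl
      _ = α (decompose 𝒜 (D x) j) :=
        coe_decompose_map 𝒜 𝒜 Function.injective_id hα_le (D x) j
      _ = c j • (decompose 𝒜 (D x) j : V) := hα_apply (decompose 𝒜 (D x) j).2
  rw [← sub_eq_zero, ← sub_smul] at hsmul
  exact (smul_eq_zero.mp hsmul).resolve_left (sub_ne_zero.mpr hij)

variable [AddCommGroup ι] {br : V →ₗ[R] V →ₗ[R] V}

theorem coe_decompose_bracket_of_right_mem
    (hbr : ∀ i j, Submodule.map₂ br (𝒜 i) (𝒜 j) ≤ 𝒜 (i + j)) (x : V) {y : V} {j : ι}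
    (hy : y ∈ 𝒜 j) (k : ι) :
    (decompose 𝒜 (br x y) k : V) = br (decompose 𝒜 x (k - j)) y := by
  have h := coe_decompose_map 𝒜 𝒜 (f := br.flip y) (add_left_injective j)
    (fun i _ hx => hbr i j (Submodule.apply_mem_map₂ br hx hy)) x (k - j)
  rwa [sub_add_cancel] at h

theorem coe_decompose_bracket_of_left_mem
    (hbr : ∀ i j, Submodule.map₂ br (𝒜 i) (𝒜 j) ≤ 𝒜 (i + j)) {x : V} {i : ι} (hx : x ∈ 𝒜 i)
    (y : V) (k : ι) :
    (decompose 𝒜 (br x y) k : V) = br x (decompose 𝒜 y (k - i)) := by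
  have h := coe_decompose_map 𝒜 𝒜 (f := br x) (add_right_injective i)
    (fun j _ hy => hbr i j (Submodule.apply_mem_map₂ br hx hy)) y (k - i)
  rwa [add_sub_cancel] at h

variable [IsAddTorsionFree ι] [IsDomain R] [IsTorsionFree R V] {α D : End R V} {c : ι → R}

theorem decompose_neg_eq_zero_of_derivation (hc : ∀ i j, c i = c j → i = j ∨ i = -j)
    (hbr : ∀ i j, Submodule.map₂ br (𝒜 i) (𝒜 j) ≤ 𝒜 (i + j))
    (hα : ∀ i, 𝒜 i ≤ End.eigenspace α (c i)) (hDα : Commute D α)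
    (hD : ∀ x y, D (br x y) = br (D x) y + br x (D y)) {k : ι} (hk : k ≠ 0) {z : V}
    (hz : z ∈ Submodule.map₂ br (𝒜 (-k)) (𝒜 (k + k))) :
    (decompose 𝒜 (D z) (-k) : V) = 0 := by
  have two_ne : 2 • k ≠ 0 := smul_ne_zero two_ne_zero hk
  have four_ne : 4 • k ≠ 0 := smul_ne_zero four_ne_zero hk
  have hc_left : c (-k) ≠ c (-k - (k + k)) := fun h => by
    obtain h | h := hc _ _ h
    · exact two_ne (by linear_combination (norm := abel) h)
    · exact four_ne (by linear_combination (norm := abel) -h)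
  have hc_right : c (k + k) ≠ c (-k - -k) := fun h => by
    obtain h | h := hc _ _ h <;> exact two_ne (by simpa [two_nsmul] using h)
  rw [Submodule.map₂_eq_span_image2] at hz
  induction hz using Submodule.span_induction with
  | mem _ h =>
    obtain ⟨x, hx, y, hy, rfl⟩ := h
    rw [hD, decompose_add, DirectSum.add_apply, Submodule.coe_add,
      coe_decompose_bracket_of_right_mem hbr (D x) hy, coe_decompose_bracket_of_left_mem hbr hx,
      decompose_eq_zero_of_commute hα hDα hc_left hx,
      decompose_eq_zero_of_commute hα hDα hc_right hy, map_zero, LinearMap.zero_apply, map_zero,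
      add_zero]
  | zero => simp
  | add _ _ _ _ h₁ h₂ => simp [h₁, h₂]
  | smul _ _ _ h => simp [DirectSum.smul_apply, h]

theorem derivation_eq_degree_zero_add_inner_general (hc : ∀ i j, c i = c j → i = j ∨ i = -j)
    (hbr : ∀ i j, Submodule.map₂ br (𝒜 i) (𝒜 j) ≤ 𝒜 (i + j))
    (hspan : ∀ i, i ≠ 0 → 𝒜 i ≤ Submodule.map₂ br (𝒜 (-i)) (𝒜 (i + i)))
    (hα : ∀ i, 𝒜 i ≤ End.eigenspace α (c i)) (hDα : Commute D α)
    (hD : ∀ x y, D (br x y) = br (D x) y + br x (D y)) (i : ι) :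
    𝒜 i ≤ (𝒜 i).comap D := by
  refine fun x hx => mem_of_forall_ne_decompose_eq_zero 𝒜 fun j hji => ?_
  by_cases hj : j = -i
  · have hi : i ≠ 0 := by rintro rfl; simp [hj] at hji
    exact hj ▸ decompose_neg_eq_zero_of_derivation hc hbr hα hDα hD hi (hspan i hi hx)
  · refine decompose_eq_zero_of_commute hα hDα (fun hij => ?_) hx
    obtain h | h := hc j i hij.symm
    exacts [hji h, hj h]

end Graded

section Wgr

theorem Lb_mem_Wgr (n : ℤ) : Lb n ∈ Wgr n := Submodule.subset_span (Set.mem_insert _ _)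

theorem Mb_mem_Wgr (n : ℤ) : Mb n ∈ Wgr n := Submodule.subset_span (Set.mem_insert_of_mem _ rfl)

/-- The map sending an element of `W_q` to the family of its homogeneous components. -/
def decomposeWgr : Wq →ₗ[ℂ] ⨁ n, Wgr n :=
  LinearMap.coprod
    (Finsupp.lsum ℂ fun n => LinearMap.toSpanSingleton ℂ _ (lof ℂ ℤ (Wgr ·) n ⟨_, Lb_mem_Wgr n⟩))
    (Finsupp.lsum ℂ fun n => LinearMap.toSpanSingleton ℂ _ (lof ℂ ℤ (Wgr ·) n ⟨_, Mb_mem_Wgr n⟩))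

theorem decomposeWgr_Lb (n : ℤ) :
    decomposeWgr (Lb n) = lof ℂ ℤ (Wgr ·) n ⟨Lb n, Lb_mem_Wgr n⟩ := by
  simp [decomposeWgr, Lb]

theorem decomposeWgr_Mb (n : ℤ) :
    decomposeWgr (Mb n) = lof ℂ ℤ (Wgr ·) n ⟨Mb n, Mb_mem_Wgr n⟩ := by
  simp [decomposeWgr, Mb]

/-- The grading of `W_q` as the internal direct sum of the subspaces `W_qⁿ`. -/
instance : Decomposition Wgr :=
  Decomposition.ofLinearMap Wgr decomposeWgr
    (by ext <;> simp [decomposeWgr, Lb, Mb])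
    (by
      ext n ⟨x, hx⟩ : 2
      obtain ⟨a, b, rfl⟩ := Submodule.mem_span_pair.mp hx
      simp only [LinearMap.comp_apply, coeLinearMap_lof, LinearMap.id_apply, map_add, map_smul,
        decomposeWgr_Lb, decomposeWgr_Mb]
      simp only [← map_smul, ← map_add]
      rfl)

theorem Wgr_le_eigenspace {α : Wq →ₗ[ℂ] Wq} {n : ℤ} {c : ℂ} (hαL : α (Lb n) = c • Lb n)
    (hαM : α (Mb n) = c • Mb n) : Wgr n ≤ End.eigenspace α c := by
  rw [Wgr, Submodule.span_le, Set.pair_subset_iff]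
  exact ⟨End.mem_eigenspace_iff.mpr hαL, End.mem_eigenspace_iff.mpr hαM⟩

variable {br : Wq →ₗ[ℂ] Wq →ₗ[ℂ] Wq} {i j : ℤ} {a b c : ℂ}

theorem map₂_Wgr_le (hLL : br (Lb i) (Lb j) = a • Lb (j + i))
    (hLM : br (Lb i) (Mb j) = b • Mb (j + i)) (hML : br (Mb i) (Lb j) = c • Mb (i + j))
    (hMM : br (Mb i) (Mb j) = 0) : Submodule.map₂ br (Wgr i) (Wgr j) ≤ Wgr (i + j) := by
  rw [add_comm] at hLL hLM
  rw [Wgr, Wgr, Submodule.map₂_span_span, Submodule.span_le]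
  simp only [Set.image2_subset_iff, Set.mem_insert_iff, Set.mem_singleton_iff, forall_eq_or_imp,
    forall_eq, SetLike.mem_coe, hLL, hLM, hML, hMM]
  exact ⟨⟨Submodule.smul_mem _ _ (Lb_mem_Wgr _), Submodule.smul_mem _ _ (Mb_mem_Wgr _)⟩,
    Submodule.smul_mem _ _ (Mb_mem_Wgr _), zero_mem _⟩

theorem Wgr_add_le_map₂ (ha : a ≠ 0) (hb : b ≠ 0) (hLL : br (Lb i) (Lb j) = a • Lb (j + i))
    (hLM : br (Lb i) (Mb j) = b • Mb (j + i)) :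
    Wgr (i + j) ≤ Submodule.map₂ br (Wgr i) (Wgr j) := by
  rw [add_comm i j, Wgr, Submodule.span_le, Set.pair_subset_iff]
  refine ⟨(Submodule.smul_mem_iff _ ha).mp ?_, (Submodule.smul_mem_iff _ hb).mp ?_⟩
  · exact hLL ▸ Submodule.apply_mem_map₂ br (Lb_mem_Wgr i) (Lb_mem_Wgr j)
  · exact hLM ▸ Submodule.apply_mem_map₂ br (Lb_mem_Wgr i) (Mb_mem_Wgr j)

end Wgr

section QNumbers

theorem zpow_eq_one_iff_of_forall_pos {G : Type*} [DivisionMonoid G] {g : G}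
    (hg : ∀ k : ℤ, 1 ≤ k → g ^ k ≠ 1) {k : ℤ} : g ^ k = 1 ↔ k = 0 := by
  refine ⟨fun h => ?_, fun h => by rw [h, zpow_zero]⟩
  by_contra hk
  obtain hk | hk := lt_or_gt_of_ne hk
  · exact hg (-k) (by omega) (by rw [zpow_neg, h, inv_one])
  · exact hg k hk h

variable {q : ℂ}

theorem qnum_ne_zero_s15 (hq0 : q ≠ 0) (hq1 : ∀ k : ℤ, 1 ≤ k → q ^ k ≠ 1) {n : ℤ} (hn : n ≠ 0) :
    qnum q n ≠ 0 := by
  have zpow_sub_ne {m : ℤ} (hm : m ≠ 0) : q ^ m - q ^ (-m) ≠ 0 := fun h => by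
    have : q ^ (m + m) = 1 := by
      rw [zpow_add₀ hq0]
      nth_rw 2 [sub_eq_zero.mp h]
      rw [← zpow_add₀ hq0, add_neg_cancel, zpow_zero]
    rw [zpow_eq_one_iff_of_forall_pos hq1] at this
    omega
  exact div_ne_zero (zpow_sub_ne hn) (by simpa using zpow_sub_ne one_ne_zero)

theorem qang_sub_qang (hq0 : q ≠ 0) (m n : ℤ) :
    qang q m - qang q n = q ^ (-m) * ((q ^ (m - n) - 1) * (q ^ (m + n) - 1)) := by
  simp only [qang, zpow_neg, zpow_sub₀ hq0, zpow_add₀ hq0]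
  have hm : q ^ m ≠ 0 := zpow_ne_zero m hq0
  have hn : q ^ n ≠ 0 := zpow_ne_zero n hq0
  field_simp
  ring

theorem eq_or_eq_neg_of_qang_eq (hq0 : q ≠ 0) (hq1 : ∀ k : ℤ, 1 ≤ k → q ^ k ≠ 1) {m n : ℤ}
    (h : qang q m = qang q n) : m = n ∨ m = -n := by
  rw [← sub_eq_zero, qang_sub_qang hq0, mul_eq_zero_iff_left (zpow_ne_zero _ hq0),
    mul_eq_zero, sub_eq_zero, sub_eq_zero, zpow_eq_one_iff_of_forall_pos hq1,
    zpow_eq_one_iff_of_forall_pos hq1] at h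
  omega

end QNumbers

/-- Every derivation of the q-deformed W(2,2) algebra is the sum of a
derivation of degree zero and an inner derivation. -/
theorem derivation_eq_degree_zero_add_inner (q : ℂ) (hq0 : q ≠ 0)
    (hq1 : ∀ k : ℤ, 1 ≤ k → q ^ k ≠ 1)
    (br : Wq →ₗ[ℂ] Wq →ₗ[ℂ] Wq) (α : Wq →ₗ[ℂ] Wq)
    (hLL : ∀ n m : ℤ, br (Lb n) (Lb m) = qnum q (m - n) • Lb (m + n))
    (hLM : ∀ n m : ℤ, br (Lb n) (Mb m) = qnum q (m - n) • Mb (m + n))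
    (hML : ∀ m n : ℤ, br (Mb m) (Lb n) = qnum q (n - m) • Mb (m + n))
    (hMM : ∀ n m : ℤ, br (Mb n) (Mb m) = 0)
    (hαL : ∀ n : ℤ, α (Lb n) = qang q n • Lb n)
    (hαM : ∀ n : ℤ, α (Mb n) = qang q n • Mb n)
    (D : Wq →ₗ[ℂ] Wq)
    (hDα : ∀ x : Wq, D (α x) = α (D x))
    (hDder : ∀ x y : Wq, D (br x y) = br (D x) y + br x (D y)) :
    ∃ (D₀ : Wq →ₗ[ℂ] Wq) (v : Wq),
      (∀ (n : ℤ), ∀ x ∈ Wgr n, D₀ x ∈ Wgr n) ∧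
      (∀ x y : Wq, D₀ (br x y) = br (D₀ x) y + br x (D₀ y)) ∧
      (∀ x : Wq, D x = D₀ x + br x v) := by
  have hbr (i j : ℤ) : Submodule.map₂ br (Wgr i) (Wgr j) ≤ Wgr (i + j) :=
    map₂_Wgr_le (hLL i j) (hLM i j) (hML i j) (hMM i j)
  have hspan (k : ℤ) (hk : k ≠ 0) : Wgr k ≤ Submodule.map₂ br (Wgr (-k)) (Wgr (k + k)) := by
    have hqnum : qnum q (k + k - -k) ≠ 0 := qnum_ne_zero_s15 hq0 hq1 (by omega)
    simpa using Wgr_add_le_map₂ hqnum hqnum (hLL (-k) (k + k)) (hLM (-k) (k + k))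
  have hα (n : ℤ) : Wgr n ≤ End.eigenspace α (qang q n) := Wgr_le_eigenspace (hαL n) (hαM n)
  have hdegree (n : ℤ) : Wgr n ≤ (Wgr n).comap D :=
    derivation_eq_degree_zero_add_inner_general (fun _ _ => eq_or_eq_neg_of_qang_eq hq0 hq1)
      hbr hspan hα (LinearMap.ext hDα) hDder n
  exact ⟨D, 0, fun n _ hx => hdegree n hx, hDder, fun x => by simp⟩
end
end
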